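/- For N = 3, any ratio vector (σ_1, σ_2) satisfies the algebraic relation σ_2 = m_2/(n(1 - σ_1)), where n = m_1 + m_2 + m_3. -/

import Mathlib

/-!
Clearing denominators, the critical points `x1`, `x2` are the two roots of the quadratic
`m1 (x - r2) (x - r3) + m2 (x - r1) (x - r3) + m3 (x - r1) (x - r2)`, whose leading coefficient
is `n`; hence it equals `n (x - x1) (x - x2)`. Evaluating at `x = r2` gives
`n (r2 - x1) (r2 - x2) = m2 (r2 - r1) (r2 - r3)`, and dividing by `(r2 - r1) (r2 - r3)` turns this
into `n (1 - σ1) σ2 = m2`.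
-/

/-- For `N = 3`, any ratio vector `(σ₁, σ₂)` satisfies `σ₂ = m₂/(n(1-σ₁))`. -/
theorem stmt_4 (m1 m2 m3 : ℝ) (hm1 : 0 < m1) (hm2 : 0 < m2) (hm3 : 0 < m3)
    (n : ℝ) (hn : n = m1 + m2 + m3)
    (r1 r2 r3 : ℝ) (h12 : r1 < r2) (h23 : r2 < r3)
    (x1 x2 : ℝ) (hx1 : x1 ∈ Set.Ioo r1 r2) (hx2 : x2 ∈ Set.Ioo r2 r3)
    (hc1 : m1 / (x1 - r1) + m2 / (x1 - r2) + m3 / (x1 - r3) = 0)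
    (hc2 : m1 / (x2 - r1) + m2 / (x2 - r2) + m3 / (x2 - r3) = 0)
    (σ1 σ2 : ℝ) (hσ1 : σ1 = (x1 - r1) / (r2 - r1)) (hσ2 : σ2 = (x2 - r2) / (r3 - r2)) :
    σ2 = m2 / (n * (1 - σ1)) := by
  obtain ⟨a1, b1⟩ := hx1
  obtain ⟨a2, b2⟩ := hx2
  have quad : ∀ x : ℝ, x - r1 ≠ 0 → x - r2 ≠ 0 → x - r3 ≠ 0 →
      m1 / (x - r1) + m2 / (x - r2) + m3 / (x - r3) = 0 →
      m1 * (x - r2) * (x - r3) + m2 * (x - r1) * (x - r3) + m3 * (x - r1) * (x - r2) = 0 := by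
    intro x h1 h2 h3 h
    field_simp at h
    linear_combination h
  have q1 := quad x1 (sub_ne_zero.2 (by grind)) (sub_ne_zero.2 (by grind)) (sub_ne_zero.2 (by grind)) hc1
  have q2 := quad x2 (sub_ne_zero.2 (by grind)) (sub_ne_zero.2 (by grind)) (sub_ne_zero.2 (by grind)) hc2
  -- Vieta's formula for the product of the roots, in the shifted variable `x - r2`:
  -- the combination `y2 Q(x1) - y1 Q(x2)` with `yᵢ = xᵢ - r2` cancels the linear coefficient.
  have key : n * (x1 - r2) * (x2 - r2) = m2 * (r2 - r1) * (r2 - r3) := by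
    have hne : x1 - x2 ≠ 0 := sub_ne_zero.2 (by grind)
    apply mul_left_cancel₀ hne
    rw [hn]
    linear_combination (x2 - r2) * q1 - (x1 - r2) * q2
  have hn0 : n ≠ 0 := by rw [hn]; positivity
  have d1 : r2 - r1 ≠ 0 := sub_ne_zero.2 h12.ne'
  have d2 : r3 - r2 ≠ 0 := sub_ne_zero.2 h23.ne'
  have e1 : r2 - x1 ≠ 0 := sub_ne_zero.2 b1.ne'
  have hs : 1 - σ1 = (r2 - x1) / (r2 - r1) := by
    rw [hσ1]; field_simp; ring
  rw [hs, hσ2, div_eq_div_iff d2 (by positivity)]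
  field_simp
  linear_combination -key
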